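/- Let n ≥ 1 be a natural number and η, b ∈ ℝ and ε ≥ 0. Let μ₋ be the n-fold product on ℝ^n of the real Gaussian measure with mean −η and variance 1. Then μ₋({x ∈ ℝ^n : ∃ δ ∈ ℝ^n, (∀ k, |δ_k| ≤ ε) ∧ (1/√n)·∑_{k=1}^n (x_k + δ_k) + b > 0}) = Φ(−√n·(η−ε) + b). (Robust error on the tail class −1 of the uniform-weight linear classifier with arbitrary bias b under ℓ∞ perturbations of size ε, as computed in the proof of Theorem 1.) -/

import Mathlib

open MeasureTheory ProbabilityTheory

/-- The standard normal CDF, as an `ℝ≥0∞`-valued measure of `Iic t`. -/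
noncomputable def stdNormalCDF (t : ℝ) : ENNReal := gaussianReal 0 1 (Set.Iic t)

lemma map_sum_pi_gaussian (n : ℕ) (m : ℝ) :
    (Measure.pi fun _ : Fin n => gaussianReal m 1).map (fun x => ∑ k, x k)
      = gaussianReal (n * m) n := by
  have hind : iIndepFun (fun (k : Fin n) (x : Fin n → ℝ) => x k)
      (Measure.pi fun _ : Fin n => gaussianReal m 1) :=
    iIndepFun_pi (X := fun _ => id) (fun _ => aemeasurable_id)
  apply Measure.ext_of_charFun
  rw [hind.charFun_map_fun_sum_eq_prod (fun k => (measurable_pi_apply k).aemeasurable)]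
  ext t
  have h : ∀ k : Fin n, (Measure.pi fun _ : Fin n => gaussianReal m 1).map (fun x => x k)
      = gaussianReal m 1 := fun k =>
    (measurePreserving_eval (fun _ : Fin n => gaussianReal m 1) k).map_eq
  simp only [h, Finset.prod_apply, charFun_gaussianReal, Finset.prod_const, Finset.card_univ,
    Fintype.card_fin, ← Complex.exp_nat_mul]
  congr 1
  push_cast
  ring

/-- Robust error on the tail class `−1` of the uniform-weight linear classifier with
arbitrary bias `b` under `ℓ∞` perturbations of size `ε`. -/
theorem tail_robust_error (n : ℕ) (hn : 1 ≤ n) (η b ε : ℝ) (hε : 0 ≤ ε) :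
    (Measure.pi fun _ : Fin n => gaussianReal (-η) 1)
      {x : Fin n → ℝ | ∃ δ : Fin n → ℝ, (∀ k, |δ k| ≤ ε) ∧
        (1 / Real.sqrt n) * (∑ k, (x k + δ k)) + b > 0}
      = stdNormalCDF (-Real.sqrt n * (η - ε) + b) := by
  have hn0 : (0:ℝ) < n := by exact_mod_cast hn
  have hs : 0 < Real.sqrt n := Real.sqrt_pos.2 hn0
  have hss : Real.sqrt n * Real.sqrt n = n := Real.mul_self_sqrt hn0.le
  have hlaw : (gaussianReal (n * (-η)) n).map (fun s => -Real.sqrt n * η - s / Real.sqrt n)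
      = gaussianReal 0 1 := by
    have h1 := gaussianReal_map_div_const (μ := n * (-η)) (v := n) (Real.sqrt n)
    have h2 := gaussianReal_map_const_sub (μ := n * (-η) / Real.sqrt n) (v := 1)
      (-Real.sqrt n * η)
    have hv : (n : NNReal) / NNReal.mk (Real.sqrt n ^ 2) (sq_nonneg _) = 1 := by
      have : NNReal.mk (Real.sqrt n ^ 2) (sq_nonneg _) = n := by
        ext; simp
      rw [this, div_self]
      exact_mod_cast (by omega : n ≠ 0)
    have hm : -Real.sqrt n * η - n * (-η) / Real.sqrt n = 0 := by
      field_simp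
      rw [sq, hss]
      ring
    rw [hm] at h2
    rw [← h2]
    rw [← hv, ← h1, Measure.map_map (by fun_prop) (by fun_prop)]
    rfl
  have hset : {x : Fin n → ℝ | ∃ δ : Fin n → ℝ, (∀ k, |δ k| ≤ ε) ∧
        (1 / Real.sqrt n) * (∑ k, (x k + δ k)) + b > 0}
      = (fun x : Fin n → ℝ => ∑ k, x k) ⁻¹' ((fun s => -Real.sqrt n * η - s / Real.sqrt n) ⁻¹'
        Set.Iio (-Real.sqrt n * (η - ε) + b)) := by
    ext x
    simp only [Set.mem_ofPred_eq, Set.mem_preimage, Set.mem_Iio]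
    have key : (1 / Real.sqrt n) * (∑ k, x k + n * ε) + b
        = (∑ k, x k) / Real.sqrt n + Real.sqrt n * ε + b := by
      field_simp
      nlinarith
    constructor
    · rintro ⟨δ, hδ, h⟩
      have h3 : ∑ k, (x k + δ k) ≤ ∑ k, x k + n * ε := by
        rw [Finset.sum_add_distrib]
        have : ∑ k, δ k ≤ ∑ _k : Fin n, ε := Finset.sum_le_sum fun k _ => (abs_le.1 (hδ k)).2
        simp at this
        linarith
      have := mul_le_mul_of_nonneg_left h3 (by positivity : 0 ≤ 1 / Real.sqrt n)
      linarith
    · intro h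
      refine ⟨fun _ => ε, fun _ => (abs_of_nonneg hε).le, ?_⟩
      rw [Finset.sum_add_distrib]
      simp only [Finset.sum_const, Finset.card_univ, Fintype.card_fin, nsmul_eq_mul]
      linarith
  have : NullSingletonClass (gaussianReal 0 1) := nullSingletonClass_gaussianReal one_ne_zero
  have hmeas : Measurable (fun s : ℝ => -Real.sqrt n * η - s / Real.sqrt n) := by fun_prop
  rw [hset, ← Measure.map_apply (by fun_prop) (hmeas measurableSet_Iio), map_sum_pi_gaussian,
    ← Measure.map_apply hmeas measurableSet_Iio, hlaw, stdNormalCDF]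
  exact measure_congr Iio_ae_eq_Iic
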